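/- Fix an integer n ≥ 1. Let Ω₁ ⊆ ℍ_s^n be real-path-connected, let Ω₂ ⊆ ℍ_s^n be Ω₁-stem-preserving, and let f : Ω₂ → ℍ be path-slice. Let q ∈ Ω₁ with q ∉ ℝ^n, and let γ, δ ∈ 𝒫(ℂ^n, Ω₁) be paths such that γ^{ℑ(q)}([0,1]) ⊆ Ω₁, δ^{ℑ(q)}([0,1]) ⊆ Ω₁ and γ^{ℑ(q)}(1) = δ^{ℑ(q)}(1) = q. Then F_{Ω₁}^f(γ) = F_{Ω₁}^f(δ); in other words, the map ℱ_{Ω₁}^f : Ω₁ → ℍ^{2×1} is well defined. -/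

import Mathlib

open scoped ENNReal NNReal

noncomputable section

/-- The real quaternions. -/
abbrev ℍ := Quaternion ℝ

/-- The set `𝕊` of imaginary units of the quaternions. -/
def QS : Set ℍ := {I | I ^ 2 = -1}

/-- `Ψ_i^I : ℂ^n → ℂ_I^n ⊆ ℍ^n`, sending `x + y i` to `x + y I` componentwise. -/
def PsiI (n : ℕ) (I : ℍ) (z : Fin n → ℂ) : Fin n → ℍ :=
  fun ℓ => algebraMap ℝ ℍ (z ℓ).re + (z ℓ).im • I

/-- The slice `ℂ_I^n = (ℝ + ℝ I)^n ⊆ ℍ^n`. -/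
def sliceCn (n : ℕ) (I : ℍ) : Set (Fin n → ℍ) := Set.range (PsiI n I)

/-- The weakly slice cone `ℍ_s^n = ⋃_{I ∈ 𝕊} ℂ_I^n`. -/
def weakSliceCone (n : ℕ) : Set (Fin n → ℍ) := ⋃ I ∈ QS, sliceCn n I

/-- `Ω` is slice open (i.e. `Ω ∈ τ_s(ℍ_s^n)`): `Ω ⊆ ℍ_s^n` and each slice
`Ω_I = Ω ∩ ℂ_I^n` is open in `ℂ_I^n`, encoded via the homeomorphism `Ψ_i^I`. -/
def sliceOpen (n : ℕ) (Ω : Set (Fin n → ℍ)) : Prop :=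
  Ω ⊆ weakSliceCone n ∧ ∀ I ∈ QS, IsOpen (PsiI n I ⁻¹' Ω)

/-- The set `𝒫(ℂ^n)` of continuous paths `[0,1] → ℂ^n` with real start point,
encoded as functions `ℝ → ℂ^n` continuous on `[0,1]`. -/
def PathsC (n : ℕ) : Set (ℝ → Fin n → ℂ) :=
  {γ | ContinuousOn γ (Set.Icc 0 1) ∧ ∀ ℓ, (γ 0 ℓ).im = 0}

/-- `γ^I([0,1]) ⊆ Ω`. -/
def pathInSlice (n : ℕ) (Ω : Set (Fin n → ℍ)) (I : ℍ) (γ : ℝ → Fin n → ℂ) : Prop :=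
  ∀ t ∈ Set.Icc (0 : ℝ) 1, PsiI n I (γ t) ∈ Ω

/-- The set `𝕊(Ω, γ) = {I ∈ 𝕊 : γ^I ⊆ Ω}`. -/
def sliceUnits (n : ℕ) (Ω : Set (Fin n → ℍ)) (γ : ℝ → Fin n → ℂ) : Set ℍ :=
  {I | I ∈ QS ∧ pathInSlice n Ω I γ}

/-- The set `𝒫(ℂ^n, Ω)`. -/
def PathsIn (n : ℕ) (Ω : Set (Fin n → ℍ)) : Set (ℝ → Fin n → ℂ) :=
  {γ | γ ∈ PathsC n ∧ ∃ I, I ∈ sliceUnits n Ω γ}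

/-- The straight segment `𝓛_z^w(t) = (1 - t)z + tw`. -/
def segPath (n : ℕ) (z w : Fin n → ℂ) : ℝ → Fin n → ℂ :=
  fun t => (1 - t) • z + t • w

/-- Concatenation of paths. -/
def concatP (n : ℕ) (γ δ : ℝ → Fin n → ℂ) : ℝ → Fin n → ℂ :=
  fun t => if t ≤ 1 / 2 then γ (2 * t) else δ (2 * t - 1)

/-- `𝓛_γ(z) := γ ∘ 𝓛_{γ(1)}^z`, the extension of `γ` by the segment from `γ(1)` to `z`. -/
def extendPath (n : ℕ) (γ : ℝ → Fin n → ℂ) (z : Fin n → ℂ) : ℝ → Fin n → ℂ :=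
  concatP n γ (segPath n (γ 1) z)

/-- The ball `B_{𝒫(ℂ^n)}(γ, r)` in path space. -/
def pathBall (n : ℕ) (γ : ℝ → Fin n → ℂ) (r : ℝ) : Set (ℝ → Fin n → ℂ) :=
  {β | ∃ z ∈ Metric.ball (γ 1) r, β = extendPath n γ z}

/-- `B_I(c^I, r) ⊆ Ω_I`, encoded via `Ψ_i^I`. -/
def ballInSlice (n : ℕ) (Ω : Set (Fin n → ℍ)) (I : ℍ) (c : Fin n → ℂ) (r : ℝ) : Prop :=
  ∀ w ∈ Metric.ball c r, PsiI n I w ∈ Ω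

/-- `r_{γ,Ω}`, as an extended nonnegative real. -/
def rPath (n : ℕ) (Ω : Set (Fin n → ℍ)) (γ : ℝ → Fin n → ℂ) : ℝ≥0∞ :=
  sSup {x : ℝ≥0∞ | ∃ r : ℝ≥0, x = r ∧ pathBall n γ r ⊆ PathsIn n Ω}

/-- `r^{𝕊'}_{γ,Ω}`, as an extended nonnegative real. -/
def rSliceSet (n : ℕ) (Ω : Set (Fin n → ℍ)) (γ : ℝ → Fin n → ℂ) (S' : Set ℍ) : ℝ≥0∞ :=
  sSup {x : ℝ≥0∞ | ∃ r : ℝ≥0, x = r ∧ ∀ I ∈ S', ballInSlice n Ω I (γ 1) r}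

/-- `r²_{γ,Ω}`, as an extended nonnegative real. -/
def r2Slice (n : ℕ) (Ω : Set (Fin n → ℍ)) (γ : ℝ → Fin n → ℂ) : ℝ≥0∞ :=
  sSup {x : ℝ≥0∞ | ∃ S'' : Set ℍ, S'' ⊆ sliceUnits n Ω γ ∧ S''.Nontrivial ∧ x = rSliceSet n Ω γ S''}

/-- `r^I_{γ,Ω}`, as an extended nonnegative real. -/
def rISlice (n : ℕ) (Ω : Set (Fin n → ℍ)) (γ : ℝ → Fin n → ℂ) (I : ℍ) : ℝ≥0∞ :=
  sSup {x : ℝ≥0∞ | ∃ r : ℝ≥0, x = r ∧ ballInSlice n Ω I (γ 1) r}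

/-- `Ω` is real-path-connected. -/
def realPathConnected (n : ℕ) (Ω : Set (Fin n → ℍ)) : Prop :=
  ∀ q ∈ Ω, ∃ γ ∈ PathsIn n Ω, ∃ I ∈ sliceUnits n Ω γ, PsiI n I (γ 1) = q

/-- `Ω₂` is `Ω₁`-stem-preserving. -/
def stemPreserving (n : ℕ) (Ω₁ Ω₂ : Set (Fin n → ℍ)) : Prop :=
  (∀ γ ∈ PathsIn n Ω₁, (sliceUnits n Ω₂ γ).Nontrivial) ∧
  (∀ α ∈ PathsIn n Ω₁, ∀ β ∈ PathsIn n Ω₁, α 1 = β 1 →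
    ¬ ∃ I, sliceUnits n Ω₂ α ∩ sliceUnits n Ω₂ β = {I})

/-- `F : 𝒫(ℂ^n, Ω) → ℍ^{2×1}` is a (path-slice) stem function of `f`:
`f(γ^I(1)) = (1, I)·F(γ)`. -/
def isStemOf (n : ℕ) (Ω : Set (Fin n → ℍ)) (f : (Fin n → ℍ) → ℍ)
    (F : (ℝ → Fin n → ℂ) → ℍ × ℍ) : Prop :=
  ∀ γ ∈ PathsIn n Ω, ∀ I ∈ sliceUnits n Ω γ, f (PsiI n I (γ 1)) = (F γ).1 + I * (F γ).2

/-- `f` is a path-slice function on `Ω`. -/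
def PathSliceFn (n : ℕ) (Ω : Set (Fin n → ℍ)) (f : (Fin n → ℍ) → ℍ) : Prop :=
  ∃ F, isStemOf n Ω f F

/-- `f` is (weakly) slice regular on `Ω`: each restriction `f_I` is real differentiable
and satisfies the Cauchy-Riemann equations `(∂/∂x_ℓ + I ∂/∂y_ℓ) f_I = 0`. -/
def SliceRegular (n : ℕ) (Ω : Set (Fin n → ℍ)) (f : (Fin n → ℍ) → ℍ) : Prop :=
  ∀ I ∈ QS,
    DifferentiableOn ℝ (fun z => f (PsiI n I z)) (PsiI n I ⁻¹' Ω) ∧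
    ∀ z ∈ PsiI n I ⁻¹' Ω, ∀ ℓ : Fin n,
      fderivWithin ℝ (fun z => f (PsiI n I z)) (PsiI n I ⁻¹' Ω) z (Pi.single ℓ 1)
        + I * fderivWithin ℝ (fun z => f (PsiI n I z)) (PsiI n I ⁻¹' Ω) z
            (Pi.single ℓ Complex.I) = 0

open Classical in
/-- `F_{Ω₁}^f` : a choice of stem function of the path-slice function `f : Ω₂ → ℍ`
(its restriction to `𝒫(ℂ^n, Ω₁)` is independent of the choice). -/
def stemF (n : ℕ) (Ω₂ : Set (Fin n → ℍ)) (f : (Fin n → ℍ) → ℍ) :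
    (ℝ → Fin n → ℂ) → ℍ × ℍ :=
  if h : ∃ F, isStemOf n Ω₂ f F then h.choose else fun _ => 0

open Classical in
/-- The map `ℑ : ℍ_s^n → 𝕊 ∪ {0}`. -/
def scrI {n : ℕ} (q : Fin n → ℍ) : ℍ :=
  if h : (Finset.univ.filter fun ℓ : Fin n => Quaternion.im (q ℓ) ≠ 0).Nonempty then
    ‖Quaternion.im (q ((Finset.univ.filter
        fun ℓ : Fin n => Quaternion.im (q ℓ) ≠ 0).min' h))‖⁻¹ •
      Quaternion.im (q ((Finset.univ.filter
        fun ℓ : Fin n => Quaternion.im (q ℓ) ≠ 0).min' h))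
  else 0

open Classical in
/-- The map `ℱ_{Ω₁}^g : Ω₁ → ℍ^{2×1}`. -/
def scrF (n : ℕ) (Ω₁ Ω₂ : Set (Fin n → ℍ)) (g : (Fin n → ℍ) → ℍ) (q : Fin n → ℍ) :
    ℍ × ℍ :=
  if h : (∃ ℓ, Quaternion.im (q ℓ) ≠ 0) ∧
      ∃ γ, γ ∈ PathsIn n Ω₁ ∧ pathInSlice n Ω₁ (scrI q) γ ∧ PsiI n (scrI q) (γ 1) = q then
    stemF n Ω₂ g h.2.choose
  else (g q, 0)

/-- The `*`-product `(f*g)(q) = (f(q), ℑ(q)f(q))·ℱ_{Ω₁}^g(q)`. -/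
def starProd (n : ℕ) (Ω₁ Ω₂ : Set (Fin n → ℍ)) (f g : (Fin n → ℍ) → ℍ) :
    (Fin n → ℍ) → ℍ :=
  fun q => f q * (scrF n Ω₁ Ω₂ g q).1 + scrI q * f q * (scrF n Ω₁ Ω₂ g q).2

/-- Componentwise complex conjugate of a path. -/
def conjPath (n : ℕ) (γ : ℝ → Fin n → ℂ) : ℝ → Fin n → ℂ :=
  fun t ℓ => starRingEnd ℂ (γ t ℓ)

end

/-!
A value `(1, I)·F(γ)` of a stem function determines `F(γ)` once it is known for two imaginary
units, since quaternions have no zero divisors. Two paths `γ`, `δ` in `Ω₁` lying over a common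
slice and with the same end point can be joined into a single path, `γ` followed by `δ` backwards,
which again starts at a real point and stays over that slice of `Ω₁`. The units sending this path
into `Ω₂` are exactly those sending both `γ` and `δ` into `Ω₂`, so two of them exist by
stem-preservation applied to this one path.
-/

theorem eq_of_add_mul_eq_add_mul {R : Type*} [NonUnitalNonAssocRing R] [NoZeroDivisors R]
    {x y : R} (hxy : x ≠ y) {a b c d : R}
    (hx : a + x * b = c + x * d) (hy : a + y * b = c + y * d) : a = c ∧ b = d := by
  have h_mul : (x - y) * (b - d) = 0 :=
    calc (x - y) * (b - d) = (a + x * b) - (c + x * d) - ((a + y * b) - (c + y * d)) := by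
          rw [sub_mul, mul_sub, mul_sub]; abel
      _ = 0 := by rw [hx, hy, sub_self, sub_self, sub_self]
  obtain rfl : b = d :=
    sub_eq_zero.mp ((mul_eq_zero.mp h_mul).resolve_left (sub_ne_zero.mpr hxy))
  exact ⟨add_right_cancel hx, rfl⟩

theorem mem_QS_iff {I : ℍ} : I ∈ QS ↔ I.re = 0 ∧ ‖I‖ = 1 := by
  change I ^ 2 = -1 ↔ _
  constructor
  · intro h
    have h_norm : ‖I‖ = 1 := by
      have := congrArg norm h
      rwa [norm_pow, norm_neg, norm_one, pow_eq_one_iff_of_nonneg (norm_nonneg I) two_ne_zero]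
        at this
    refine ⟨Quaternion.sq_eq_neg_normSq.mp ?_, h_norm⟩
    rw [h, Quaternion.normSq_eq_norm_mul_self, h_norm, mul_one, Quaternion.coe_one]
  · rintro ⟨h_re, h_norm⟩
    rw [Quaternion.sq_eq_neg_normSq.mpr h_re, Quaternion.normSq_eq_norm_mul_self, h_norm, mul_one,
      Quaternion.coe_one]

theorem scrI_mem_QS {n : ℕ} {q : Fin n → ℍ} (hq : ∃ ℓ, (q ℓ).im ≠ 0) : scrI q ∈ QS := by
  classical
  rw [mem_QS_iff, scrI]
  split_ifs with h
  · have h_im := Finset.min'_mem _ h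
    rw [Finset.mem_filter_univ] at h_im
    refine ⟨by rw [Quaternion.re_smul, Quaternion.re_im, smul_zero], ?_⟩
    rw [norm_smul, norm_inv, norm_norm, inv_mul_cancel₀ (norm_ne_zero_iff.mpr h_im)]
  · exact absurd (hq.imp fun ℓ hℓ => by rwa [Finset.mem_filter_univ]) h

theorem PsiI_injective {n : ℕ} {I : ℍ} (hI : I ∈ QS) : Function.Injective (PsiI n I) := by
  obtain ⟨h_re, h_norm⟩ := mem_QS_iff.mp hI
  have hI0 : I ≠ 0 := norm_ne_zero_iff.mp (h_norm ▸ one_ne_zero)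
  intro z w h
  funext ℓ
  have hℓ : ((z ℓ).re : ℍ) + (z ℓ).im • I = ((w ℓ).re : ℍ) + (w ℓ).im • I := congrFun h ℓ
  have h_re_eq : (z ℓ).re = (w ℓ).re := by
    simpa [h_re] using congrArg QuaternionAlgebra.re hℓ
  rw [h_re_eq] at hℓ
  exact Complex.ext h_re_eq (smul_left_injective ℝ hI0 (add_left_cancel hℓ))

/-- The path `γ` traversed backwards on `[0,1]`; it need not start at a real point, so it lies
outside `PathsC n` in general and serves only as the second half of a concatenation. -/
def reverseP {n : ℕ} (γ : ℝ → Fin n → ℂ) : ℝ → Fin n → ℂ :=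
  fun t => γ (1 - t)

section Paths

variable {n : ℕ} {γ δ : ℝ → Fin n → ℂ}

theorem continuousOn_reverseP (hγ : ContinuousOn γ (Set.Icc 0 1)) :
    ContinuousOn (reverseP γ) (Set.Icc 0 1) :=
  hγ.comp (by fun_prop) fun _ ht => Set.Icc.mem_iff_one_sub_mem.mp ht

theorem reverseP_zero : reverseP γ 0 = γ 1 := by
  rw [reverseP, sub_zero]

theorem pathInSlice_reverseP {Ω : Set (Fin n → ℍ)} {I : ℍ} :
    pathInSlice n Ω I (reverseP γ) ↔ pathInSlice n Ω I γ := by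
  refine ⟨fun h t ht => ?_, fun h t ht => h _ (Set.Icc.mem_iff_one_sub_mem.mp ht)⟩
  simpa only [reverseP, sub_sub_cancel] using h _ (Set.Icc.mem_iff_one_sub_mem.mp ht)

theorem sliceUnits_reverseP {Ω : Set (Fin n → ℍ)} :
    sliceUnits n Ω (reverseP γ) = sliceUnits n Ω γ := by
  simp only [sliceUnits, pathInSlice_reverseP]

theorem concatP_of_le_half {t : ℝ} (ht : t ≤ 1 / 2) : concatP n γ δ t = γ (2 * t) :=
  if_pos ht

theorem concatP_of_half_le (h : γ 1 = δ 0) {t : ℝ} (ht : 1 / 2 ≤ t) :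
    concatP n γ δ t = δ (2 * t - 1) := by
  obtain rfl | ht := ht.eq_or_lt
  · rw [concatP_of_le_half le_rfl]
    norm_num [h]
  · exact if_neg ht.not_ge

theorem continuousOn_concatP (hγ : ContinuousOn γ (Set.Icc 0 1))
    (hδ : ContinuousOn δ (Set.Icc 0 1)) (h : γ 1 = δ 0) :
    ContinuousOn (concatP n γ δ) (Set.Icc 0 1) := by
  have h_first : ContinuousOn (concatP n γ δ) (Set.Icc 0 (1 / 2)) :=
    (hγ.comp (f := fun t : ℝ => 2 * t) (by fun_prop)
      fun t ht => ⟨by linarith [ht.1], by linarith [ht.2]⟩).congr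
      fun t ht => concatP_of_le_half ht.2
  have h_second : ContinuousOn (concatP n γ δ) (Set.Icc (1 / 2) 1) :=
    (hδ.comp (f := fun t : ℝ => 2 * t - 1) (by fun_prop)
      fun t ht => ⟨by linarith [ht.1], by linarith [ht.2]⟩).congr
      fun t ht => concatP_of_half_le h ht.1
  rw [← Set.Icc_union_Icc_eq_Icc (b := (1 / 2 : ℝ)) (by norm_num) (by norm_num)]
  exact h_first.union_of_isClosed h_second isClosed_Icc isClosed_Icc

theorem concatP_mem_PathsC (hγ : γ ∈ PathsC n) (hδ : ContinuousOn δ (Set.Icc 0 1))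
    (h : γ 1 = δ 0) : concatP n γ δ ∈ PathsC n := by
  refine ⟨continuousOn_concatP hγ.1 hδ h, ?_⟩
  rw [concatP_of_le_half (by norm_num), mul_zero]
  exact hγ.2

theorem pathInSlice_concatP {Ω : Set (Fin n → ℍ)} {I : ℍ} (h : γ 1 = δ 0) :
    pathInSlice n Ω I (concatP n γ δ) ↔ pathInSlice n Ω I γ ∧ pathInSlice n Ω I δ := by
  constructor
  · refine fun H => ⟨fun t ht => ?_, fun t ht => ?_⟩
    · have := H (t / 2) ⟨by linarith [ht.1], by linarith [ht.2]⟩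
      rwa [concatP_of_le_half (by linarith [ht.2]), mul_div_cancel₀ t two_ne_zero] at this
    · have := H ((t + 1) / 2) ⟨by linarith [ht.1], by linarith [ht.2]⟩
      rwa [concatP_of_half_le h (by linarith [ht.1]), mul_div_cancel₀ _ two_ne_zero,
        add_sub_cancel_right] at this
  · rintro ⟨Hγ, Hδ⟩ t ht
    obtain h_half | h_half := le_total t (1 / 2)
    · rw [concatP_of_le_half h_half]
      exact Hγ _ ⟨by linarith [ht.1], by linarith⟩
    · rw [concatP_of_half_le h h_half]
      exact Hδ _ ⟨by linarith, by linarith [ht.2]⟩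

theorem sliceUnits_concatP {Ω : Set (Fin n → ℍ)} (h : γ 1 = δ 0) :
    sliceUnits n Ω (concatP n γ δ) = sliceUnits n Ω γ ∩ sliceUnits n Ω δ := by
  ext I
  exact (and_congr_right' (pathInSlice_concatP h)).trans and_and_left

end Paths

section StemFunctions

variable {n : ℕ} {Ω₁ Ω₂ : Set (Fin n → ℍ)} {f : (Fin n → ℍ) → ℍ}
  {F : (ℝ → Fin n → ℂ) → ℍ × ℍ} {γ δ : ℝ → Fin n → ℂ}

theorem isStemOf_stemF (hf : PathSliceFn n Ω₂ f) : isStemOf n Ω₂ f (stemF n Ω₂ f) := by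
  rw [PathSliceFn] at hf
  rw [stemF, dif_pos hf]
  exact hf.choose_spec

theorem isStemOf.eq_of_nontrivial_inter (hF : isStemOf n Ω₂ f F) (hγ : γ ∈ PathsC n)
    (hδ : δ ∈ PathsC n) (h_end : γ 1 = δ 1)
    (h_units : (sliceUnits n Ω₂ γ ∩ sliceUnits n Ω₂ δ).Nontrivial) : F γ = F δ := by
  obtain ⟨I, hI, J, hJ, hIJ⟩ := h_units
  have h_value {K : ℍ} (hK : K ∈ sliceUnits n Ω₂ γ ∩ sliceUnits n Ω₂ δ) :
      (F γ).1 + K * (F γ).2 = (F δ).1 + K * (F δ).2 := by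
    rw [← hF γ ⟨hγ, K, hK.1⟩ K hK.1, ← hF δ ⟨hδ, K, hK.2⟩ K hK.2, h_end]
  exact Prod.ext_iff.mpr (eq_of_add_mul_eq_add_mul hIJ (h_value hI) (h_value hJ))

theorem statement12_general (h_units : ∀ α ∈ PathsIn n Ω₁, (sliceUnits n Ω₂ α).Nontrivial)
    (hF : isStemOf n Ω₂ f F) (hγ : γ ∈ PathsC n) (hδ : δ ∈ PathsC n) {I : ℍ}
    (hIγ : I ∈ sliceUnits n Ω₁ γ) (hIδ : I ∈ sliceUnits n Ω₁ δ)
    (h_end : PsiI n I (γ 1) = PsiI n I (δ 1)) : F γ = F δ := by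
  have h_end : γ 1 = δ 1 := PsiI_injective hIγ.1 h_end
  have h_join : γ 1 = reverseP δ 0 := h_end.trans reverseP_zero.symm
  have h_inter (Ω : Set (Fin n → ℍ)) :
      sliceUnits n Ω (concatP n γ (reverseP δ)) = sliceUnits n Ω γ ∩ sliceUnits n Ω δ := by
    rw [sliceUnits_concatP h_join, sliceUnits_reverseP]
  have h_path : concatP n γ (reverseP δ) ∈ PathsIn n Ω₁ :=
    ⟨concatP_mem_PathsC hγ (continuousOn_reverseP hδ.1) h_join, I,
      (h_inter Ω₁).symm ▸ ⟨hIγ, hIδ⟩⟩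
  exact hF.eq_of_nontrivial_inter hγ hδ h_end (h_inter Ω₂ ▸ h_units _ h_path)

end StemFunctions

theorem statement12 (n : ℕ) (hn : 1 ≤ n) (Ω₁ Ω₂ : Set (Fin n → ℍ))
    (hΩ₁ : Ω₁ ⊆ weakSliceCone n) (hΩ₂ : Ω₂ ⊆ weakSliceCone n)
    (hrc : realPathConnected n Ω₁) (hsp : stemPreserving n Ω₁ Ω₂)
    (f : (Fin n → ℍ) → ℍ) (hf : PathSliceFn n Ω₂ f)
    (q : Fin n → ℍ) (hq : q ∈ Ω₁) (hqR : ∃ ℓ, Quaternion.im (q ℓ) ≠ 0)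
    (γ δ : ℝ → Fin n → ℂ) (hγ : γ ∈ PathsIn n Ω₁) (hδ : δ ∈ PathsIn n Ω₁)
    (hγs : pathInSlice n Ω₁ (scrI q) γ) (hδs : pathInSlice n Ω₁ (scrI q) δ)
    (hγe : PsiI n (scrI q) (γ 1) = q) (hδe : PsiI n (scrI q) (δ 1) = q) :
    stemF n Ω₂ f γ = stemF n Ω₂ f δ :=
  statement12_general hsp.1 (isStemOf_stemF hf) hγ.1 hδ.1 ⟨scrI_mem_QS hqR, hγs⟩
    ⟨scrI_mem_QS hqR, hδs⟩ (hγe.trans hδe.symm)
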